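/- arXiv:2002.05119 — 2 statements merged into one kernel-verified Lean document; each statement's English description precedes it below -/
import Mathlib

section
/- Let X be a partial allocation, let g be an unallocated good, and suppose agent i champions agent j; let G_{ij} be a maximum-cardinality subset G of X_j ∪ {g} with v_i((X_j ∪ {g}) ∖ G) > v_i(X_i). If agent k is not a most envious agent for X_j ∪ {g}, then v_k((X_j ∪ {g}) ∖ G_{ij}) ≤ v_k(X_k). -/
open Finset

/-- Additive value of a bundle `S` under per-good valuation `v`. -/
noncomputable def val {G : Type*} (v : G → ℝ) (S : Finset G) : ℝ := ∑ g ∈ S, v g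

/-- `X` is EFX: no agent `i` strongly envies agent `j`, i.e. for every good `g`
in `X j`, `v_i(X_i) ≥ v_i(X_j \ {g})`. -/
def EFX {G : Type*} [DecidableEq G] (v : Fin 3 → G → ℝ) (X : Fin 3 → Finset G) : Prop :=
  ∀ i j : Fin 3, ∀ g ∈ X j, val (v i) (X j \ {g}) ≤ val (v i) (X i)

/-- `κ_X(i,S)`: the minimum cardinality of a subset `S' ⊆ S` with `v_i(S') > v_i(X_i)`. -/
noncomputable def kappa {G : Type*} (v : G → ℝ) (Xi S : Finset G) : ℕ :=
  sInf {n : ℕ | ∃ S' ⊆ S, S'.card = n ∧ val v Xi < val v S'}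

/-- Agent `i` is a most envious agent for the bundle `S` under allocation `X`. -/
def MostEnvious {G : Type*} (v : Fin 3 → G → ℝ) (X : Fin 3 → Finset G)
    (i : Fin 3) (S : Finset G) : Prop :=
  val (v i) (X i) < val (v i) S ∧
    ∀ k : Fin 3, val (v k) (X k) < val (v k) S →
      kappa (v i) (X i) S ≤ kappa (v k) (X k) S

theorem kappa_le_card {G : Type*} (v : G → ℝ) {Xi S T : Finset G} (hTS : T ⊆ S)
    (hT : val v Xi < val v T) : kappa v Xi S ≤ T.card :=
  Nat.sInf_le ⟨T, hTS, rfl, hT⟩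

/-- Removing a maximum-cardinality removable set leaves at most `κ` goods. -/
theorem card_sdiff_le_kappa {G : Type*} [DecidableEq G] (v : G → ℝ) {Xi S R : Finset G}
    (hRS : R ⊆ S) (hR : val v Xi < val v (S \ R))
    (hmax : ∀ R' ⊆ S, val v Xi < val v (S \ R') → R'.card ≤ R.card) :
    (S \ R).card ≤ kappa v Xi S := by
  refine le_csInf ⟨_, S \ R, sdiff_subset, rfl, hR⟩ ?_
  rintro n ⟨T, hTS, rfl, hT⟩
  have hle : (S \ T).card ≤ R.card :=
    hmax _ sdiff_subset (by rwa [Finset.sdiff_sdiff_eq_self hTS])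
  have hT_card := card_sdiff_add_card_eq_card hTS
  have hR_card := card_sdiff_add_card_eq_card hRS
  omega

/-- Observation 4 (part 2): if `i` champions `j` with `G_ij` a maximum-cardinality removable
set, then any agent `k` that is not a most envious agent for `X_j ∪ {g}` does not prefer
`(X_j ∪ {g}) \ G_ij` to his own bundle. -/
theorem non_champion_does_not_envy_champion_bundle {G : Type*} [DecidableEq G] (M : Finset G)
    (v : Fin 3 → G → ℝ) (hv : ∀ i : Fin 3, ∀ g ∈ M, 0 ≤ v i g)
    (X : Fin 3 → Finset G) (hXM : ∀ i, X i ⊆ M)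
    (hdisj : ∀ i j, i ≠ j → Disjoint (X i) (X j))
    (g : G) (hg : g ∈ M) (hun : g ∉ X 0 ∪ X 1 ∪ X 2)
    (i j : Fin 3) (hch : MostEnvious v X i (X j ∪ {g}))
    (Gij : Finset G) (hGsub : Gij ⊆ X j ∪ {g})
    (hGval : val (v i) (X i) < val (v i) ((X j ∪ {g}) \ Gij))
    (hGmax : ∀ G' ⊆ X j ∪ {g},
      val (v i) (X i) < val (v i) ((X j ∪ {g}) \ G') → G'.card ≤ Gij.card)
    (k : Fin 3) (hk : ¬ MostEnvious v X k (X j ∪ {g})) :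
    val (v k) ((X j ∪ {g}) \ Gij) ≤ val (v k) (X k) := by
  by_contra! hlt
  have hSM : X j ∪ {g} ⊆ M := union_subset (hXM j) (singleton_subset_iff.2 hg)
  have hmono : val (v k) ((X j ∪ {g}) \ Gij) ≤ val (v k) (X j ∪ {g}) :=
    sum_le_sum_of_subset_of_nonneg sdiff_subset fun a ha _ => hv k a (hSM ha)
  exact hk ⟨hlt.trans_le hmono, fun l hl =>
    (kappa_le_card (v k) sdiff_subset hlt).trans
      ((card_sdiff_le_kappa (v i) hGsub hGval hGmax).trans (hch.2 l hl))⟩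
end

section
/- In a non-degenerate instance, let X be a partial EFX allocation that is envy-free (v_i(X_i) ≥ v_i(X_j) for all agents i, j, equivalently the envy graph E_X has three sources), and let g be an unallocated good. Then there exists a partial EFX allocation Y with Y_1 ∪ Y_2 ∪ Y_3 ⊆ X_1 ∪ X_2 ∪ X_3 ∪ {g} that Pareto dominates X. -/
open Finset

/-- A bundle is tolerable at level `t` if it is worth at most `t` after removing any good. -/
def Tolerable {G : Type*} [DecidableEq G] (w : G → ℝ) (t : ℝ) (S : Finset G) : Prop :=
  ∀ h ∈ S, val w (S \ {h}) ≤ t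

/-- Some EFX allocation of goods from `W` Pareto dominates `X`. -/
def Improvable {G : Type*} [DecidableEq G] (v : Fin 3 → G → ℝ) (X : Fin 3 → Finset G)
    (W : Finset G) : Prop :=
  ∃ Y : Fin 3 → Finset G, (∀ i j, i ≠ j → Disjoint (Y i) (Y j)) ∧ (∀ i, Y i ⊆ W) ∧ EFX v Y ∧
    (∀ i, val (v i) (X i) ≤ val (v i) (Y i)) ∧ ∃ i, val (v i) (X i) < val (v i) (Y i)

/-- An envy-free allocation in which agent `i` holds `T i ∪ D i`, together with a further good `g`,
such that all agents tolerate every `insert g (T j)` and no agent `i` gains by trading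
`D i` for `g`. -/
structure EnvyFreeSplit {G : Type*} [DecidableEq G] (v : Fin 3 → G → ℝ) (T D : Fin 3 → Finset G)
    (g : G) (W : Finset G) : Prop where
  nonneg : ∀ i, ∀ h ∈ W, 0 ≤ v i h
  subset_left : ∀ i, T i ⊆ W
  subset_right : ∀ i, D i ⊆ W
  mem : g ∈ W
  disjoint_split : ∀ i, Disjoint (T i) (D i)
  disjoint : ∀ i j, i ≠ j → Disjoint (T i ∪ D i) (T j ∪ D j)
  notMem_left : ∀ i, g ∉ T i
  notMem_right : ∀ i, g ∉ D i
  envyFree : ∀ i j, val (v i) (T j ∪ D j) ≤ val (v i) (T i ∪ D i)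
  tolerable : ∀ i j, Tolerable (v i) (val (v i) (T i ∪ D i)) (insert g (T j))
  discard : ∀ i, v i g ≤ val (v i) (D i)

/-- Agent `k` prefers `insert g (T j)` to its own bundle. -/
def Champions {G : Type*} [DecidableEq G] (v : Fin 3 → G → ℝ) (T D : Fin 3 → Finset G) (g : G)
    (k j : Fin 3) : Prop :=
  val (v k) (T k ∪ D k) < val (v k) (insert g (T j))

section

lemma val_mono {G : Type*} {w : G → ℝ} {S T : Finset G} (hw : ∀ h ∈ T, 0 ≤ w h) (hST : S ⊆ T) :
    val w S ≤ val w T :=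
  Finset.sum_le_sum_of_subset_of_nonneg hST fun h hh _ => hw h hh

variable {G : Type*} [DecidableEq G]

lemma val_union (w : G → ℝ) {S T : Finset G} (h : Disjoint S T) :
    val w (S ∪ T) = val w S + val w T :=
  Finset.sum_union h

lemma val_insert (w : G → ℝ) {S : Finset G} {g : G} (h : g ∉ S) :
    val w (insert g S) = w g + val w S :=
  Finset.sum_insert h

lemma tolerable_of_val_le {w : G → ℝ} {S : Finset G} {t : ℝ} (hw : ∀ h ∈ S, 0 ≤ w h)
    (hS : val w S ≤ t) : Tolerable w t S :=
  fun _ _ => (val_mono hw Finset.sdiff_subset).trans hS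

lemma exists_subset_sdiff_singleton_minimal {p : Finset G → Prop} {S : Finset G} (hS : p S) :
    ∃ P ⊆ S, p P ∧ ∀ h ∈ P, ¬ p (P \ {h}) := by
  obtain ⟨P, hPS, hP⟩ := exists_minimal_le_of_wellFoundedLT p S hS
  refine ⟨P, hPS, hP.prop, fun h hh hp => ?_⟩
  have := hP.le_of_le hp Finset.sdiff_subset hh
  simp at this

lemma eq_or_eq_or_eq_of_ne {a b c : Fin 3} (hab : a ≠ b) (hac : a ≠ c) (hbc : b ≠ c) (i : Fin 3) :
    i = a ∨ i = b ∨ i = c := by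
  omega

/-- Three disjoint bundles, each tolerated by the two agents not receiving it, no agent losing and
one of them gaining, form a dominating EFX allocation. -/
lemma improvable_of_bundles {v : Fin 3 → G → ℝ} {X : Fin 3 → Finset G} {W : Finset G}
    (hv : ∀ i, ∀ h ∈ W, 0 ≤ v i h) {a b c : Fin 3} (hab : a ≠ b) (hac : a ≠ c) (hbc : b ≠ c)
    {P Q R : Finset G} (hP : P ⊆ W) (hQ : Q ⊆ W) (hR : R ⊆ W)
    (hPQ : Disjoint P Q) (hPR : Disjoint P R) (hQR : Disjoint Q R)
    (ha : val (v a) (X a) ≤ val (v a) P) (hb : val (v b) (X b) ≤ val (v b) Q)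
    (hc : val (v c) (X c) ≤ val (v c) R)
    (hlt : val (v a) (X a) < val (v a) P ∨ val (v b) (X b) < val (v b) Q ∨
      val (v c) (X c) < val (v c) R)
    (haQ : Tolerable (v a) (val (v a) (X a)) Q) (haR : Tolerable (v a) (val (v a) (X a)) R)
    (hbP : Tolerable (v b) (val (v b) (X b)) P) (hbR : Tolerable (v b) (val (v b) (X b)) R)
    (hcP : Tolerable (v c) (val (v c) (X c)) P) (hcQ : Tolerable (v c) (val (v c) (X c)) Q) :
    Improvable v X W := by
  have hall := eq_or_eq_or_eq_of_ne hab hac hbc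
  let Y : Fin 3 → Finset G := fun i => if i = a then P else if i = b then Q else R
  have hYa : Y a = P := by simp [Y]
  have hYb : Y b = Q := by simp [Y, hab.symm]
  have hYc : Y c = R := by simp [Y, hac.symm, hbc.symm]
  have hYW : ∀ i, Y i ⊆ W := fun i => by
    rcases hall i with rfl | rfl | rfl <;> simpa only [hYa, hYb, hYc]
  refine ⟨Y, fun i j hij => ?_, hYW, fun i j h hh => ?_, fun i => ?_, ?_⟩
  · rcases hall i with rfl | rfl | rfl <;> rcases hall j with rfl | rfl | rfl <;>
      first
      | exact absurd rfl hij
      | simpa only [hYa, hYb, hYc]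
      | simpa only [hYa, hYb, hYc] using hPQ.symm
      | simpa only [hYa, hYb, hYc] using hPR.symm
      | simpa only [hYa, hYb, hYc] using hQR.symm
  · by_cases hij : i = j
    · subst hij
      exact val_mono (fun x hx => hv i x (hYW i hx)) Finset.sdiff_subset
    · rcases hall i with rfl | rfl | rfl <;> rcases hall j with rfl | rfl | rfl <;>
        first
        | exact absurd rfl hij
        | (simp only [hYa, hYb, hYc] at hh ⊢
           first
           | exact (haQ h hh).trans ha
           | exact (haR h hh).trans ha
           | exact (hbP h hh).trans hb
           | exact (hbR h hh).trans hb
           | exact (hcP h hh).trans hc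
           | exact (hcQ h hh).trans hc)
  · rcases hall i with rfl | rfl | rfl <;> simpa only [hYa, hYb, hYc]
  · rcases hlt with h | h | h
    exacts [⟨a, by rwa [hYa]⟩, ⟨b, by rwa [hYb]⟩, ⟨c, by rwa [hYc]⟩]

namespace EnvyFreeSplit

variable {v : Fin 3 → G → ℝ} {T D : Fin 3 → Finset G} {g : G} {W : Finset G}

lemma subset_bundle (hs : EnvyFreeSplit v T D g W) (i : Fin 3) : T i ∪ D i ⊆ W :=
  Finset.union_subset (hs.subset_left i) (hs.subset_right i)

lemma subset_cross (hs : EnvyFreeSplit v T D g W) (i j : Fin 3) : T i ∪ D j ⊆ W :=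
  Finset.union_subset (hs.subset_left i) (hs.subset_right j)

lemma subset_insert (hs : EnvyFreeSplit v T D g W) (i : Fin 3) : insert g (T i) ⊆ W :=
  Finset.insert_subset hs.mem (hs.subset_left i)

lemma disjoint_left_right (hs : EnvyFreeSplit v T D g W) (i j : Fin 3) : Disjoint (T i) (D j) := by
  by_cases hij : i = j
  · exact hij ▸ hs.disjoint_split i
  · exact (hs.disjoint i j hij).mono Finset.subset_union_left Finset.subset_union_right

lemma disjoint_left (hs : EnvyFreeSplit v T D g W) {i j : Fin 3} (hij : i ≠ j) :
    Disjoint (T i) (T j) :=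
  (hs.disjoint i j hij).mono Finset.subset_union_left Finset.subset_union_left

lemma disjoint_right (hs : EnvyFreeSplit v T D g W) {i j : Fin 3} (hij : i ≠ j) :
    Disjoint (D i) (D j) :=
  (hs.disjoint i j hij).mono Finset.subset_union_right Finset.subset_union_right

lemma val_cross (hs : EnvyFreeSplit v T D g W) (k i j : Fin 3) :
    val (v k) (T i ∪ D j) = val (v k) (T i) + val (v k) (D j) :=
  val_union _ (hs.disjoint_left_right i j)

lemma val_insert_left (hs : EnvyFreeSplit v T D g W) (k i : Fin 3) :
    val (v k) (insert g (T i)) = v k g + val (v k) (T i) :=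
  val_insert _ (hs.notMem_left i)

lemma tolerable_of_subset (hs : EnvyFreeSplit v T D g W) {k : Fin 3} {S R : Finset G} {t : ℝ}
    (hR : R ⊆ W) (hSR : S ⊆ R) (h : val (v k) R ≤ t) : Tolerable (v k) t S :=
  tolerable_of_val_le (fun x hx => hs.nonneg k x (hR (hSR hx)))
    ((val_mono (fun x hx => hs.nonneg k x (hR hx)) hSR).trans h)

lemma tolerable_of_le (hs : EnvyFreeSplit v T D g W) {k : Fin 3} {S : Finset G} {t : ℝ}
    (hS : S ⊆ W) (h : val (v k) S ≤ t) : Tolerable (v k) t S :=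
  hs.tolerable_of_subset hS Finset.Subset.rfl h

lemma tolerable_bundle (hs : EnvyFreeSplit v T D g W) (k j : Fin 3) :
    Tolerable (v k) (val (v k) (T k ∪ D k)) (T j ∪ D j) :=
  hs.tolerable_of_le (hs.subset_bundle j) (hs.envyFree k j)

lemma champions_discard_lt (hs : EnvyFreeSplit v T D g W) {k j : Fin 3}
    (h : Champions v T D g k j) : val (v k) (D j) < v k g := by
  have h₁ := hs.envyFree k j
  rw [Champions, hs.val_insert_left] at h
  rw [hs.val_cross k j j] at h₁
  linarith

/-- Two agents championing each other, when the third does not prefer `T b ∪ D a`. -/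
lemma improvable_of_two_cycle_of_le (hs : EnvyFreeSplit v T D g W) {a b c : Fin 3}
    (hab : a ≠ b) (hac : a ≠ c) (hbc : b ≠ c)
    (h₁ : Champions v T D g a b) (h₂ : Champions v T D g b a)
    (hc : val (v c) (T b ∪ D a) ≤ val (v c) (T c ∪ D c)) :
    Improvable v (fun i => T i ∪ D i) W := by
  have hdb := hs.discard b
  have hda := hs.discard a
  have hba := hs.champions_discard_lt h₂
  have ha : val (v a) (T a ∪ D a) < val (v a) (T b ∪ D a) := by
    rw [Champions, hs.val_insert_left] at h₁
    rw [hs.val_cross a b a]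
    linarith
  have hb : val (v b) (T b ∪ D a) ≤ val (v b) (T b ∪ D b) := by
    rw [hs.val_cross, hs.val_cross]
    linarith
  refine improvable_of_bundles hs.nonneg hab hac hbc (hs.subset_cross b a) (hs.subset_insert a)
    (hs.subset_bundle c) ?_ ?_ ?_ ha.le h₂.le le_rfl (.inl ha) (hs.tolerable a a)
    (hs.tolerable_bundle a c) (hs.tolerable_of_le (hs.subset_cross b a) hb)
    (hs.tolerable_bundle b c) (hs.tolerable_of_le (hs.subset_cross b a) hc) (hs.tolerable c a)
  · simp [hs.notMem_left, hs.notMem_right, hs.disjoint_left hab.symm,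
      (hs.disjoint_left_right a a).symm]
  · simp [hs.disjoint_left hbc, hs.disjoint_left_right b c, (hs.disjoint_left_right c a).symm,
      hs.disjoint_right hac]
  · simp [hs.notMem_left, hs.notMem_right, hs.disjoint_left hac, hs.disjoint_left_right a c]

lemma improvable_of_two_cycle (hs : EnvyFreeSplit v T D g W) {a b c : Fin 3}
    (hab : a ≠ b) (hac : a ≠ c) (hbc : b ≠ c)
    (h₁ : Champions v T D g a b) (h₂ : Champions v T D g b a) :
    Improvable v (fun i => T i ∪ D i) W := by
  by_cases hc : val (v c) (T b ∪ D a) ≤ val (v c) (T c ∪ D c)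
  · exact hs.improvable_of_two_cycle_of_le hab hac hbc h₁ h₂ hc
  · refine hs.improvable_of_two_cycle_of_le hab.symm hbc hac h₂ h₁ ?_
    have ha := hs.envyFree c a
    have hb := hs.envyFree c b
    simp only [hs.val_cross] at *
    linarith

/-- A cycle of three champions, when `c` does not prefer `T c ∪ D b` and `a` does not prefer
`T a ∪ D c`. -/
lemma improvable_of_three_cycle_of_le (hs : EnvyFreeSplit v T D g W) {a b c : Fin 3}
    (hab : a ≠ b) (hac : a ≠ c) (hbc : b ≠ c)
    (h₁ : Champions v T D g a b) (h₂ : Champions v T D g b c) (h₃ : Champions v T D g c a)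
    (hn₁ : ¬ Champions v T D g a c) (hn₂ : ¬ Champions v T D g b a)
    (hc : val (v c) (T c ∪ D b) ≤ val (v c) (T c ∪ D c))
    (ha : val (v a) (T a ∪ D c) ≤ val (v a) (T a ∪ D a)) :
    Improvable v (fun i => T i ∪ D i) W := by
  have hdb := hs.discard b
  have hdc := hs.discard c
  have h₁' := hs.champions_discard_lt h₁
  have h₂' := hs.champions_discard_lt h₂
  rw [Champions, hs.val_insert_left] at h₂ h₃
  rw [Champions, not_lt, hs.val_insert_left] at hn₁ hn₂
  have hb : val (v b) (T b ∪ D b) ≤ val (v b) (T c ∪ D b) := by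
    rw [hs.val_cross b c b]
    linarith
  have hc' : val (v c) (T c ∪ D c) ≤ val (v c) (T a ∪ D c) := by
    rw [hs.val_cross c a c]
    linarith
  have haQ : val (v a) (T c ∪ D b) ≤ val (v a) (T a ∪ D a) := by
    rw [hs.val_cross a c b]
    linarith
  have hbR : val (v b) (T a ∪ D c) ≤ val (v b) (T b ∪ D b) := by
    rw [hs.val_cross b a c]
    linarith
  refine improvable_of_bundles hs.nonneg hab hac hbc (hs.subset_insert b) (hs.subset_cross c b)
    (hs.subset_cross a c) ?_ ?_ ?_ h₁.le hb hc' (.inl h₁)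
    (hs.tolerable_of_le (hs.subset_cross c b) haQ) (hs.tolerable_of_le (hs.subset_cross a c) ha)
    (hs.tolerable b b) (hs.tolerable_of_le (hs.subset_cross a c) hbR)
    (hs.tolerable c b) (hs.tolerable_of_le (hs.subset_cross c b) hc)
  · simp [hs.notMem_left, hs.notMem_right, hs.disjoint_left hbc, hs.disjoint_left_right b b]
  · simp [hs.notMem_left, hs.notMem_right, hs.disjoint_left hab.symm, hs.disjoint_left_right b c]
  · simp [hs.disjoint_left hac.symm, hs.disjoint_left_right c c,
      (hs.disjoint_left_right a b).symm, hs.disjoint_right hbc]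

/-- A cycle of three champions, when `a` prefers `T a ∪ D c` and `b` prefers `T b ∪ D a`: a minimal
part of `T b ∪ D c` that `a` or `c` still prefers goes to one of them. -/
lemma improvable_of_three_cycle_of_lt (hs : EnvyFreeSplit v T D g W) {a b c : Fin 3}
    (hab : a ≠ b) (hac : a ≠ c) (hbc : b ≠ c)
    (h₁ : Champions v T D g a b) (h₂ : Champions v T D g b c) (h₃ : Champions v T D g c a)
    (ha : val (v a) (T a ∪ D a) < val (v a) (T a ∪ D c))
    (hb : val (v b) (T b ∪ D b) < val (v b) (T b ∪ D a)) :
    Improvable v (fun i => T i ∪ D i) W := by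
  have hda := hs.discard a
  have hdb := hs.discard b
  have hdc := hs.discard c
  have h₂' := hs.champions_discard_lt h₂
  have h₃' := hs.champions_discard_lt h₃
  have hac' := hs.envyFree a c
  have hE : val (v a) (T a ∪ D a) < val (v a) (T b ∪ D c) := by
    rw [Champions, hs.val_insert_left] at h₁
    simp only [hs.val_cross] at *
    linarith
  obtain ⟨E, hEs, hEp, hEmin⟩ := exists_subset_sdiff_singleton_minimal
    (p := fun S => val (v a) (T a ∪ D a) < val (v a) S ∨ val (v c) (T c ∪ D c) < val (v c) S)
    (.inl hE)
  simp only [not_or, not_lt] at hEmin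
  have hEW : E ⊆ W := hEs.trans (hs.subset_cross b c)
  have hbE : Tolerable (v b) (val (v b) (T b ∪ D b)) E := by
    refine hs.tolerable_of_subset (hs.subset_cross b c) hEs ?_
    simp only [hs.val_cross]
    linarith
  rcases hEp with hEa | hEc
  · have hbQ : val (v b) (T b ∪ D b) ≤ val (v b) (T c ∪ D a) := by
      rw [Champions, hs.val_insert_left] at h₂
      simp only [hs.val_cross] at *
      linarith
    have haQ : val (v a) (T c ∪ D a) ≤ val (v a) (T a ∪ D a) := by
      simp only [hs.val_cross] at *
      linarith
    have hcQ : val (v c) (T c ∪ D a) ≤ val (v c) (T c ∪ D c) := by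
      simp only [hs.val_cross] at *
      linarith
    refine improvable_of_bundles hs.nonneg hab hac hbc hEW (hs.subset_cross c a)
      (hs.subset_insert a) ?_ ?_ ?_ hEa.le hbQ h₃.le (.inl hEa)
      (hs.tolerable_of_le (hs.subset_cross c a) haQ) (hs.tolerable a a)
      hbE (hs.tolerable b a) (fun h hh => (hEmin h hh).2)
      (hs.tolerable_of_le (hs.subset_cross c a) hcQ)
    · refine Disjoint.mono_left hEs ?_
      simp [hs.disjoint_left hbc, hs.disjoint_left_right b a, (hs.disjoint_left_right c c).symm,
        hs.disjoint_right hac.symm]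
    · refine Disjoint.mono_left hEs ?_
      simp [hs.notMem_left, hs.notMem_right, hs.disjoint_left hab.symm,
        (hs.disjoint_left_right a c).symm]
    · simp [hs.notMem_left, hs.notMem_right, hs.disjoint_left hac.symm,
        (hs.disjoint_left_right a a).symm]
  · refine improvable_of_bundles hs.nonneg hab hac hbc (hs.subset_bundle a) (hs.subset_insert c)
      hEW ?_ ?_ ?_ le_rfl h₂.le hEc.le (.inr (.inr hEc)) (hs.tolerable a c)
      (fun h hh => (hEmin h hh).1) (hs.tolerable_bundle b a) hbE (hs.tolerable_bundle c a)
      (hs.tolerable c c)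
    · simp [hs.notMem_left, hs.notMem_right, hs.disjoint_left hac,
        (hs.disjoint_left_right c a).symm]
    · refine Disjoint.mono_right hEs ?_
      simp [hs.disjoint_left hab, hs.disjoint_left_right a c, (hs.disjoint_left_right b a).symm,
        hs.disjoint_right hac]
    · refine Disjoint.mono_right hEs ?_
      simp [hs.notMem_left, hs.notMem_right, hs.disjoint_left hbc.symm,
        hs.disjoint_left_right c c]

lemma improvable_of_three_cycle (hs : EnvyFreeSplit v T D g W) {a b c : Fin 3}
    (hab : a ≠ b) (hac : a ≠ c) (hbc : b ≠ c)
    (h₁ : Champions v T D g a b) (h₂ : Champions v T D g b c) (h₃ : Champions v T D g c a) :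
    Improvable v (fun i => T i ∪ D i) W := by
  by_cases hn₁ : Champions v T D g a c
  · exact hs.improvable_of_two_cycle hac hab hbc.symm hn₁ h₃
  by_cases hn₂ : Champions v T D g b a
  · exact hs.improvable_of_two_cycle hab hac hbc h₁ hn₂
  by_cases hn₃ : Champions v T D g c b
  · exact hs.improvable_of_two_cycle hbc hab.symm hac.symm h₂ hn₃
  rcases le_or_gt (val (v a) (T a ∪ D c)) (val (v a) (T a ∪ D a)) with ha | ha <;>
  rcases le_or_gt (val (v b) (T b ∪ D a)) (val (v b) (T b ∪ D b)) with hb | hb <;>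
  rcases le_or_gt (val (v c) (T c ∪ D b)) (val (v c) (T c ∪ D c)) with hc | hc <;>
  first
  | exact hs.improvable_of_three_cycle_of_le hab hac hbc h₁ h₂ h₃ hn₁ hn₂ hc ha
  | exact hs.improvable_of_three_cycle_of_le hbc hab.symm hac.symm h₂ h₃ h₁ hn₂ hn₃ ha hb
  | exact hs.improvable_of_three_cycle_of_le hac.symm hbc.symm hab h₃ h₁ h₂ hn₃ hn₁ hb hc
  | exact hs.improvable_of_three_cycle_of_lt hab hac hbc h₁ h₂ h₃ ha hb
  | exact hs.improvable_of_three_cycle_of_lt hbc hab.symm hac.symm h₂ h₃ h₁ hb hc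
  | exact hs.improvable_of_three_cycle_of_lt hac.symm hbc.symm hab h₃ h₁ h₂ hc ha

/-- If every bundle has a champion, following champions leads to a cycle. -/
lemma improvable (hs : EnvyFreeSplit v T D g W)
    (hch : ∀ j, ∃ k, k ≠ j ∧ Champions v T D g k j) :
    Improvable v (fun i => T i ∪ D i) W := by
  obtain ⟨k₀, hk₀, h₀⟩ := hch 0
  obtain ⟨k₁, hk₁, h₁⟩ := hch 1
  obtain ⟨k₂, hk₂, h₂⟩ := hch 2
  have h01 : (0 : Fin 3) ≠ 1 := by decide
  have h02 : (0 : Fin 3) ≠ 2 := by decide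
  have h12 : (1 : Fin 3) ≠ 2 := by decide
  have e₀ : k₀ = 1 ∨ k₀ = 2 := by omega
  have e₁ : k₁ = 0 ∨ k₁ = 2 := by omega
  have e₂ : k₂ = 0 ∨ k₂ = 1 := by omega
  rcases e₀ with rfl | rfl <;> rcases e₁ with rfl | rfl <;> rcases e₂ with rfl | rfl <;>
  first
  | exact hs.improvable_of_two_cycle h01 h02 h12 h₁ h₀
  | exact hs.improvable_of_two_cycle h02 h01 h12.symm h₂ h₀
  | exact hs.improvable_of_two_cycle h12 h01.symm h02.symm h₂ h₁
  | exact hs.improvable_of_three_cycle h01 h02 h12 h₁ h₂ h₀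
  | exact hs.improvable_of_three_cycle h02 h01 h12.symm h₂ h₁ h₀

end EnvyFreeSplit

/-- A positively valued good can be added to an envy-free allocation with a Pareto improvement. -/
lemma improvable_of_envyFree {v : Fin 3 → G → ℝ} {X : Fin 3 → Finset G} {g : G} {W : Finset G}
    (hv : ∀ i, ∀ h ∈ W, 0 ≤ v i h) (hXW : ∀ i, X i ⊆ W)
    (hdisj : ∀ i j, i ≠ j → Disjoint (X i) (X j))
    (hEF : ∀ i j, val (v i) (X j) ≤ val (v i) (X i))
    (hgW : g ∈ W) (hgX : ∀ i, g ∉ X i) (hpos : ∀ i, 0 < v i g) :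
    Improvable v X W := by
  have hmin (j : Fin 3) := exists_subset_sdiff_singleton_minimal
    (p := fun S => ∃ i, val (v i) (X i) < val (v i) S) (S := insert g (X j))
    ⟨j, by rw [val_insert _ (hgX j)]; linarith [hpos j]⟩
  choose P hPs hPp hPmin using hmin
  simp only [not_exists, not_lt] at hPmin
  have htol (i j : Fin 3) : Tolerable (v i) (val (v i) (X i)) (P j) := fun h hh => hPmin j h hh i
  have hPW (j : Fin 3) : P j ⊆ W := (hPs j).trans (Finset.insert_subset hgW (hXW j))
  have hXtol (i j : Fin 3) : Tolerable (v i) (val (v i) (X i)) (X j) :=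
    tolerable_of_val_le (fun h hh => hv i h (hXW j hh)) (hEF i j)
  have hPX {j k : Fin 3} (hjk : j ≠ k) : Disjoint (P j) (X k) :=
    Disjoint.mono_left (hPs j) (by simp [hgX, hdisj j k hjk])
  by_cases hself : ∃ j, val (v j) (X j) < val (v j) (P j)
  · obtain ⟨j, hj⟩ := hself
    obtain ⟨b, c, hjb, hjc, hbc⟩ : ∃ b c : Fin 3, j ≠ b ∧ j ≠ c ∧ b ≠ c := by
      clear hj
      revert j
      decide
    exact improvable_of_bundles hv hjb hjc hbc (hPW j) (hXW b) (hXW c) (hPX hjb) (hPX hjc)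
      (hdisj b c hbc) hj.le le_rfl le_rfl (.inl hj) (hXtol j b) (hXtol j c) (htol b j)
      (hXtol b c) (htol c j) (hXtol c b)
  simp only [not_exists, not_lt] at hself
  have hgP (j : Fin 3) : g ∈ P j := by
    by_contra hg
    obtain ⟨i, hi⟩ := hPp j
    have hsub : P j ⊆ X j := (Finset.subset_insert_iff_of_notMem hg).1 (hPs j)
    exact absurd (val_mono (fun h hh => hv i h (hXW j hh)) hsub)
      (not_le.2 ((hEF i j).trans_lt hi))
  have hTX (j : Fin 3) : (P j).erase g ⊆ X j := Finset.subset_insert_iff.1 (hPs j)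
  have hins (j : Fin 3) : insert g ((P j).erase g) = P j := Finset.insert_erase (hgP j)
  have hun (j : Fin 3) : (P j).erase g ∪ (X j \ (P j).erase g) = X j :=
    Finset.union_sdiff_of_subset (hTX j)
  have hsplit : EnvyFreeSplit v (fun j => (P j).erase g) (fun j => X j \ (P j).erase g) g W :=
    { nonneg := hv
      subset_left := fun i => (hTX i).trans (hXW i)
      subset_right := fun i => Finset.sdiff_subset.trans (hXW i)
      mem := hgW
      disjoint_split := fun i => Finset.disjoint_sdiff
      disjoint := by simpa only [hun] using hdisj
      notMem_left := fun i => Finset.notMem_erase g _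
      notMem_right := fun i h => hgX i (Finset.sdiff_subset h)
      envyFree := by simpa only [hun] using hEF
      tolerable := by simpa only [hun, hins] using htol
      discard := fun i => by
        have h := hself i
        have hX := val_union (v i) (Finset.disjoint_sdiff (s := (P i).erase g) (t := X i))
        rw [← hins i, val_insert _ (Finset.notMem_erase g _)] at h
        rw [hun i] at hX
        linarith }
  have key := hsplit.improvable fun j => by
    obtain ⟨k, hk⟩ := hPp j
    refine ⟨k, ?_, by simpa only [Champions, hun, hins] using hk⟩
    rintro rfl
    exact absurd hk (not_lt.2 (hself k))
  simpa only [hun] using key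

end

/-- Lemma 9 (three sources): in a non-degenerate instance, if the partial EFX allocation `X`
is envy-free and `g` is unallocated, then there is a Pareto dominating partial EFX
allocation using only the goods of `X` plus `g`. -/
theorem three_sources_dominating_efx {G : Type*} [DecidableEq G] (M : Finset G)
    (v : Fin 3 → G → ℝ) (hv : ∀ i : Fin 3, ∀ g ∈ M, 0 ≤ v i g)
    (hnd : ∀ i : Fin 3, ∀ S ⊆ M, ∀ T ⊆ M, S ≠ T → val (v i) S ≠ val (v i) T)
    (X : Fin 3 → Finset G) (hXM : ∀ i, X i ⊆ M)
    (hdisj : ∀ i j, i ≠ j → Disjoint (X i) (X j))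
    (hEFX : EFX v X)
    (hEF : ∀ i j : Fin 3, val (v i) (X j) ≤ val (v i) (X i))
    (g : G) (hg : g ∈ M) (hun : g ∉ X 0 ∪ X 1 ∪ X 2) :
    ∃ Y : Fin 3 → Finset G,
      (∀ i, Y i ⊆ M) ∧
      (∀ i j, i ≠ j → Disjoint (Y i) (Y j)) ∧
      Y 0 ∪ Y 1 ∪ Y 2 ⊆ X 0 ∪ X 1 ∪ X 2 ∪ {g} ∧
      EFX v Y ∧
      (∀ i, val (v i) (X i) ≤ val (v i) (Y i)) ∧
      (∃ i, val (v i) (X i) < val (v i) (Y i)) := by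
  have hWM : X 0 ∪ X 1 ∪ X 2 ∪ {g} ⊆ M :=
    Finset.union_subset (Finset.union_subset (Finset.union_subset (hXM 0) (hXM 1)) (hXM 2))
      (Finset.singleton_subset_iff.2 hg)
  have hXW (i : Fin 3) : X i ⊆ X 0 ∪ X 1 ∪ X 2 ∪ {g} := by
    intro x hx
    fin_cases i <;> simp_all
  have hgX (i : Fin 3) : g ∉ X i := by
    fin_cases i <;> simp_all
  have hpos (i : Fin 3) : 0 < v i g := by
    refine lt_of_le_of_ne (hv i g hg) fun h => ?_
    refine hnd i {g} (by simpa using hg) ∅ (by simp) (by simp) ?_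
    simpa [_root_.val] using h.symm
  obtain ⟨Y, hY, hYW, hYE, hle, hlt⟩ := improvable_of_envyFree
    (fun i h hh => hv i h (hWM hh)) hXW hdisj hEF (by simp) hgX hpos
  exact ⟨Y, fun i => (hYW i).trans hWM, hY,
    Finset.union_subset (Finset.union_subset (hYW 0) (hYW 1)) (hYW 2), hYE, hle, hlt⟩
end
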